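/- Let A ∈ ℝ^{n×n}, B ∈ ℝ^{n×m}, C ∈ ℝ^{m×n}, D ∈ ℝ^{m×m}. The primal LMI is infeasible if and only if the dual LMI is feasible. That is: there exist no positive definite P ∈ S^n and no Π ∈ Π_NN making [[P A + A^T P, P B],[B^T P, 0]] + [[C, D],[0, I_m]]^T Π [[C, D],[0, I_m]] negative definite, if and only if there exists a nonzero positive semidefinite H = [[H11, H12],[H12^T, H22]] ∈ S^{n+m} such that A H11 + B H12^T + (A H11 + B H12^T)^T is positive semidefinite, the matrix [[-C, I_m − D],[0, I_m]] H [[-C, I_m − D],[0, I_m]]^T has all entries nonnegative, and every diagonal entry of −C H12 + (I_m − D) H22 is zero. -/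

import Mathlib

open Matrix

/-- The block matrix `E = [[-I, I],[0, I]]`. -/
def Emat (m : ℕ) : Matrix (Fin m ⊕ Fin m) (Fin m ⊕ Fin m) ℝ :=
  fromBlocks (-1) 1 0 1

/-- The block matrix `𝒥(J) = [[0, J],[J, 0]]`. -/
def calJ {m : ℕ} (J : Matrix (Fin m) (Fin m) ℝ) : Matrix (Fin m ⊕ Fin m) (Fin m ⊕ Fin m) ℝ :=
  fromBlocks 0 J J 0

/-- The multiplier class `Π_NN`. -/
def PiNN (m : ℕ) : Set (Matrix (Fin m ⊕ Fin m) (Fin m ⊕ Fin m) ℝ) :=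
  {P | ∃ (Q : Matrix (Fin m ⊕ Fin m) (Fin m ⊕ Fin m) ℝ) (J : Matrix (Fin m) (Fin m) ℝ),
    J.IsDiag ∧ Q.IsSymm ∧ (∀ i j, 0 ≤ Q i j) ∧ P = (Emat m)ᵀ * (Q + calJ J) * Emat m}

/-!
The matrices `P A + Aᵀ P + ⋯` swept out by the primal LMI form a convex cone `K` of symmetric
matrices, and infeasibility says that no element of `-K` is positive definite. The identity is an
order unit for the cone of positive semidefinite matrices, so M. Riesz extension of
`c • 1 ↦ c` gives a linear functional that is nonnegative on both cones and equals `1` at the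
identity. In the trace pairing it is represented by a nonzero positive semidefinite `H` lying in the
dual cone of `K`. The dual cone of a sum is the intersection of the dual cones and
`⟪H, f R⟫ = ⟪f* H, R⟫`, so this membership splits into one condition for each of the three
ingredients of `K`: `P`, the nonnegative matrix `Q` and the diagonal matrix `J`.
-/

section ConvexCone

theorem nonneg_of_forall_pos_nonneg_add_mul {𝕜 : Type*} [Field 𝕜] [LinearOrder 𝕜]
    [IsStrictOrderedRing 𝕜] {a b : 𝕜} (h : ∀ t : 𝕜, 0 < t → 0 ≤ a + t * b) : 0 ≤ b := by
  by_contra! hb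
  have ht := h ((|a| + 1) / -b) (div_pos (by positivity) (neg_pos.mpr hb))
  rw [div_neg, neg_mul, div_mul_cancel₀ _ hb.ne] at ht
  linarith [le_abs_self a]

theorem forall_mem_add_nonneg_iff {𝕜 E : Type*} [Field 𝕜] [LinearOrder 𝕜]
    [IsStrictOrderedRing 𝕜] [AddCommGroup E] [Module 𝕜 E] {C₁ C₂ : ConvexCone 𝕜 E}
    (h₁ : (C₁ : Set E).Nonempty) (h₂ : (C₂ : Set E).Nonempty) (f : E →ₗ[𝕜] 𝕜) :
    (∀ x ∈ C₁ + C₂, 0 ≤ f x) ↔ (∀ x ∈ C₁, 0 ≤ f x) ∧ ∀ x ∈ C₂, 0 ≤ f x := by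
  constructor
  · intro h
    obtain ⟨x₁, hx₁⟩ := h₁
    obtain ⟨x₂, hx₂⟩ := h₂
    refine ⟨fun x hx => nonneg_of_forall_pos_nonneg_add_mul (a := f x₂) fun t ht => ?_,
      fun x hx => nonneg_of_forall_pos_nonneg_add_mul (a := f x₁) fun t ht => ?_⟩
    · simpa [add_comm] using h _ ⟨_, C₁.smul_mem ht hx, x₂, hx₂, rfl⟩
    · simpa using h _ ⟨x₁, hx₁, _, C₂.smul_mem ht hx, rfl⟩
  · rintro ⟨h₁, h₂⟩ _ ⟨x, hx, y, hy, rfl⟩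
    simpa using add_nonneg (h₁ x hx) (h₂ y hy)

theorem mem_pointedCone_hull_convexCone_iff {𝕜 E : Type*} [Field 𝕜] [LinearOrder 𝕜]
    [IsStrictOrderedRing 𝕜] [AddCommGroup E] [Module 𝕜 E] {C : ConvexCone 𝕜 E} {x : E} :
    x ∈ PointedCone.hull 𝕜 (C : Set E) ↔ x = 0 ∨ x ∈ C := by
  constructor
  · intro hx
    induction hx using Submodule.span_induction with
    | mem x hx => exact .inr hx
    | zero => exact .inl rfl
    | add x y _ _ hx hy =>
      rcases hx with rfl | hx
      · simpa using hy
      rcases hy with rfl | hy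
      · simpa using Or.inr hx
      exact .inr (C.add_mem hx hy)
    | smul c x _ hx =>
      rcases hx with rfl | hx
      · simp
      rcases eq_zero_or_pos c with rfl | hc
      · simp
      exact .inr (C.smul_mem hc hx)
  · rintro (rfl | hx)
    · exact zero_mem _
    · exact PointedCone.subset_hull hx

theorem nonneg_of_smul_mem_add {𝕜 E : Type*} [Field 𝕜] [LinearOrder 𝕜] [IsStrictOrderedRing 𝕜]
    [AddCommGroup E] [Module 𝕜 E] {C K : ConvexCone 𝕜 E} {e : E}
    (hCK : ∀ x ∈ K, ∀ ε : 𝕜, 0 < ε → -x - ε • e ∉ C) {c : 𝕜} (hc : c • e ∈ C + K) : 0 ≤ c := by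
  obtain ⟨y, hy, z, hz, hyz : y + z = c • e⟩ := hc
  by_contra! hc_neg
  refine hCK z hz (-c) (neg_pos.mpr hc_neg) ?_
  rwa [neg_smul, ← hyz, show -z - -(y + z) = y by abel]

theorem exists_linearMap_nonneg_of_orderUnit {E : Type*} [AddCommGroup E] [Module ℝ E]
    {C K : ConvexCone ℝ E} {e : E} (he : ∀ x, ∃ c : ℝ, c • e + x ∈ C)
    (hK : (K : Set E).Nonempty) (hCK : ∀ x ∈ K, ∀ ε : ℝ, 0 < ε → -x - ε • e ∉ C) :
    ∃ f : E →ₗ[ℝ] ℝ, (∀ x ∈ C, 0 ≤ f x) ∧ (∀ x ∈ K, 0 ≤ f x) ∧ f e = 1 := by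
  have hC : (C : Set E).Nonempty := let ⟨c, hc⟩ := he 0; ⟨_, hc⟩
  obtain ⟨x₀, hx₀⟩ := hK
  have he_ne : e ≠ 0 := by
    rintro rfl
    obtain ⟨c, hc⟩ := he (-x₀)
    exact hCK x₀ hx₀ 1 one_pos (by simpa using hc)
  let f₀ : E →ₗ.[ℝ] ℝ := LinearPMap.mkSpanSingleton e 1 he_ne
  have hf₀ (c : ℝ) (hc : c • e ∈ f₀.domain) : f₀ ⟨c • e, hc⟩ = c :=
    (LinearPMap.mkSpanSingleton'_apply ..).trans (mul_one c)
  have hdomain (c : ℝ) : c • e ∈ f₀.domain :=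
    Submodule.smul_mem _ c (Submodule.mem_span_singleton_self e)
  have hf₀_nonneg : ∀ x : f₀.domain,
      (x : E) ∈ PointedCone.hull ℝ ((C + K : ConvexCone ℝ E) : Set E) → 0 ≤ f₀ x := by
    rintro ⟨x, hx⟩ hxCK
    obtain ⟨c, rfl⟩ := Submodule.mem_span_singleton.mp hx
    rw [hf₀]
    rcases mem_pointedCone_hull_convexCone_iff.mp hxCK with hzero | hmem
    · exact ((smul_eq_zero.mp hzero).resolve_right he_ne).ge
    · exact nonneg_of_smul_mem_add hCK hmem
  have hdense : ∀ x, ∃ y : f₀.domain,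
      (y : E) + x ∈ PointedCone.hull ℝ ((C + K : ConvexCone ℝ E) : Set E) := by
    intro x
    obtain ⟨c, hc⟩ := he (x - x₀)
    refine ⟨⟨c • e, hdomain c⟩, PointedCone.subset_hull ⟨_, hc, x₀, hx₀, ?_⟩⟩
    change c • e + (x - x₀) + x₀ = c • e + x
    abel
  obtain ⟨f, hf, hf_nonneg⟩ := riesz_extension _ f₀ hf₀_nonneg hdense
  have hCK_nonneg := (forall_mem_add_nonneg_iff hC ⟨x₀, hx₀⟩ f).mp fun x hx =>
    hf_nonneg x (PointedCone.subset_hull hx)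
  refine ⟨f, hCK_nonneg.1, hCK_nonneg.2, ?_⟩
  simpa only [one_smul] using (hf ⟨(1 : ℝ) • e, hdomain 1⟩).trans (hf₀ 1 _)

end ConvexCone

section TracePairing

variable {ι : Type*} [Fintype ι]

theorem trace_mul_vecMulVec {R : Type*} [CommSemiring R] (M : Matrix ι ι R) (x y : ι → R) :
    (M * vecMulVec x y).trace = y ⬝ᵥ (M *ᵥ x) := by
  rw [mul_vecMulVec, trace_vecMulVec, dotProduct_comm]

theorem exists_trace_mul_eq_linearMap {R : Type*} [CommSemiring R]
    (f : Matrix ι ι R →ₗ[R] R) : ∃ K : Matrix ι ι R, ∀ M, f M = (K * M).trace := by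
  classical
  let K : Matrix ι ι R := .of fun i j => f (single j i 1)
  have hf : f = traceLinearMap ι R R ∘ₗ LinearMap.mulLeft R K := by
    refine ext_linearMap R fun i j => LinearMap.ext_ring ?_
    simp [K, trace_mul_single]
  exact ⟨K, fun M => by simpa using LinearMap.congr_fun hf M⟩

open scoped ComplexOrder in
theorem trace_mul_pos_of_posSemidef_of_posDef {𝕜 : Type*} [RCLike 𝕜] {H N : Matrix ι ι 𝕜}
    (hH : H.PosSemidef) (hH_ne : H ≠ 0) (hN : N.PosDef) : 0 < (H * N).trace := by
  obtain ⟨k, v, rfl⟩ := posSemidef_iff_eq_sum_vecMulVec.mp hH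
  obtain ⟨i, -, hi⟩ := Finset.exists_ne_zero_of_sum_ne_zero hH_ne
  have hvi : v i ≠ 0 := fun h => hi (by simp [h])
  simp_rw [trace_mul_comm _ N, Finset.mul_sum, trace_sum, trace_mul_vecMulVec]
  exact Finset.sum_pos' (fun j _ => hN.posSemidef.dotProduct_mulVec_nonneg _)
    ⟨i, Finset.mem_univ _, hN.dotProduct_mulVec_pos hvi⟩

theorem posSemidef_iff_forall_posDef_trace_mul_nonneg {X : Matrix ι ι ℝ} (hX : X.IsSymm) :
    X.PosSemidef ↔ ∀ P : Matrix ι ι ℝ, P.PosDef → 0 ≤ (X * P).trace := by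
  classical
  constructor
  · intro h P hP
    rcases eq_or_ne X 0 with rfl | hX_ne
    · simp
    · exact (trace_mul_pos_of_posSemidef_of_posDef h hX_ne hP).le
  · intro h
    refine .of_dotProduct_mulVec_nonneg (isHermitian_iff_isSymm.mpr hX) fun x =>
      nonneg_of_forall_pos_nonneg_add_mul (a := X.trace) fun t ht => ?_
    have hP : (1 + t • vecMulVec x (star x)).PosDef :=
      PosDef.one.add_posSemidef ((posSemidef_vecMulVec_self_star x).smul ht.le)
    simpa [mul_add, trace_mul_vecMulVec] using h _ hP

theorem forall_mem_add_trace_mul_nonneg_iff {𝕜 : Type*} [Field 𝕜] [LinearOrder 𝕜]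
    [IsStrictOrderedRing 𝕜] {C₁ C₂ : ConvexCone 𝕜 (Matrix ι ι 𝕜)}
    (h₁ : (C₁ : Set (Matrix ι ι 𝕜)).Nonempty) (h₂ : (C₂ : Set (Matrix ι ι 𝕜)).Nonempty)
    (H : Matrix ι ι 𝕜) :
    (∀ M ∈ C₁ + C₂, 0 ≤ (H * M).trace) ↔
      (∀ M ∈ C₁, 0 ≤ (H * M).trace) ∧ ∀ M ∈ C₂, 0 ≤ (H * M).trace := by
  classical
  simpa only [LinearMap.comp_apply, LinearMap.mulLeft_apply, traceLinearMap_apply] using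
    forall_mem_add_nonneg_iff h₁ h₂ (traceLinearMap ι 𝕜 𝕜 ∘ₗ LinearMap.mulLeft 𝕜 H)

end TracePairing

section Alternative

variable {ι : Type*} [Fintype ι]

/-- The cone of square matrices, not necessarily symmetric, whose quadratic form is nonnegative. On
all of `Matrix ι ι ℝ` it plays the role that the positive semidefinite cone plays on the symmetric
matrices: the identity is an order unit for it. -/
def nonnegFormCone (ι : Type*) [Fintype ι] : ConvexCone ℝ (Matrix ι ι ℝ) where
  carrier := {M | ∀ x : ι → ℝ, 0 ≤ x ⬝ᵥ (M *ᵥ x)}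
  smul_mem' c hc M hM x := by
    simpa [smul_mulVec] using mul_nonneg hc.le (hM x)
  add_mem' M hM N hN x := by
    simpa [add_mulVec] using add_nonneg (hM x) (hN x)

theorem exists_smul_one_add_mem_nonnegFormCone [DecidableEq ι] (M : Matrix ι ι ℝ) :
    ∃ c : ℝ, c • (1 : Matrix ι ι ℝ) + M ∈ nonnegFormCone ι := by
  refine ⟨‖toEuclideanCLM (𝕜 := ℝ) M‖, fun x => ?_⟩
  let v : EuclideanSpace ℝ ι := WithLp.toLp 2 x
  have hM : x ⬝ᵥ (M *ᵥ x) = inner ℝ v (toEuclideanCLM (𝕜 := ℝ) M v) :=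
    (inner_toEuclideanCLM M v v).symm
  have hx : x ⬝ᵥ x = ‖v‖ * ‖v‖ := by
    rw [← real_inner_self_eq_norm_mul_norm]
    rfl
  have hinner := (abs_le.mp (abs_real_inner_le_norm v (toEuclideanCLM (𝕜 := ℝ) M v))).1
  have hop := mul_le_mul_of_nonneg_left ((toEuclideanCLM (𝕜 := ℝ) M).le_opNorm v) (norm_nonneg v)
  rw [add_mulVec, smul_mulVec, one_mulVec, dotProduct_add, dotProduct_smul, smul_eq_mul, hM, hx]
  linarith

theorem posDef_of_sub_smul_one_mem_nonnegFormCone [DecidableEq ι] {M : Matrix ι ι ℝ}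
    (hM : M.IsSymm) {ε : ℝ} (hε : 0 < ε) (h : M - ε • 1 ∈ nonnegFormCone ι) : M.PosDef := by
  have hsub : (M - ε • 1).PosSemidef := .of_dotProduct_mulVec_nonneg
    (isHermitian_iff_isSymm.mpr (hM.sub (isSymm_one.smul ε))) h
  simpa using PosDef.posSemidef_add hsub (PosDef.one.smul hε)

theorem exists_posSemidef_trace_mul_eq_of_nonneg (f : Matrix ι ι ℝ →ₗ[ℝ] ℝ)
    (hf : ∀ M ∈ nonnegFormCone ι, 0 ≤ f M) :
    ∃ H : Matrix ι ι ℝ, H.PosSemidef ∧ ∀ M : Matrix ι ι ℝ, M.IsSymm → (H * M).trace = 2 * f M := by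
  obtain ⟨K, hK⟩ := exists_trace_mul_eq_linearMap f
  have htrace (M : Matrix ι ι ℝ) (hM : M.IsSymm) : ((K + Kᵀ) * M).trace = 2 * f M := by
    rw [add_mul, trace_add, hK, ← trace_transpose (Kᵀ * M), transpose_mul, transpose_transpose,
      hM.eq, trace_mul_comm M, two_mul]
  refine ⟨K + Kᵀ, .of_dotProduct_mulVec_nonneg
    (isHermitian_iff_isSymm.mpr (isSymm_add_transpose_self K)) fun x => ?_, htrace⟩
  have hsymm : (vecMulVec x (star x)).IsSymm :=
    isHermitian_iff_isSymm.mp (posSemidef_vecMulVec_self_star x).isHermitian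
  rw [← trace_mul_vecMulVec, htrace _ hsymm]
  exact mul_nonneg two_pos.le
    (hf _ fun y => (posSemidef_vecMulVec_self_star x).dotProduct_mulVec_nonneg y)

theorem forall_not_neg_posDef_iff_exists_posSemidef {K : ConvexCone ℝ (Matrix ι ι ℝ)}
    (hK : (K : Set (Matrix ι ι ℝ)).Nonempty) (hK_symm : ∀ L ∈ K, L.IsSymm) :
    (∀ L ∈ K, ¬ (-L).PosDef) ↔
      ∃ H : Matrix ι ι ℝ, H.PosSemidef ∧ H ≠ 0 ∧ ∀ L ∈ K, 0 ≤ (H * L).trace := by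
  classical
  constructor
  · intro h
    obtain ⟨f, hf_form, hfK, hf_one⟩ := exists_linearMap_nonneg_of_orderUnit
      exists_smul_one_add_mem_nonnegFormCone hK fun L hL ε hε hmem =>
        h L hL (posDef_of_sub_smul_one_mem_nonnegFormCone (hK_symm L hL).neg hε hmem)
    obtain ⟨H, hH, hHf⟩ := exists_posSemidef_trace_mul_eq_of_nonneg f hf_form
    refine ⟨H, hH, ?_, fun L hL => ?_⟩
    · rintro rfl
      simpa [hf_one] using hHf 1 isSymm_one
    · rw [hHf L (hK_symm L hL)]
      exact mul_nonneg two_pos.le (hfK L hL)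
  · rintro ⟨H, hH, hH_ne, hHK⟩ L hL hL_neg
    have hpos := trace_mul_pos_of_posSemidef_of_posDef hH hH_ne hL_neg
    rw [mul_neg, trace_neg] at hpos
    linarith [hHK L hL]

end Alternative

section Multipliers

/-- The cone of symmetric matrices with nonnegative entries, in which the matrices `Q` range. -/
def nonnegEntryCone (ι : Type*) : ConvexCone ℝ (Matrix ι ι ℝ) where
  carrier := {Q | Q.IsSymm ∧ ∀ i j, 0 ≤ Q i j}
  smul_mem' c hc _ hQ := ⟨hQ.1.smul c, fun i j => mul_nonneg hc.le (hQ.2 i j)⟩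
  add_mem' _ hQ _ hQ' := ⟨hQ.1.add hQ'.1, fun i j => add_nonneg (hQ.2 i j) (hQ'.2 i j)⟩

theorem forall_mem_nonnegEntryCone_trace_mul_nonneg_iff {ι : Type*} [Fintype ι]
    {W : Matrix ι ι ℝ} (hW : W.IsSymm) :
    (∀ Q ∈ nonnegEntryCone ι, 0 ≤ (W * Q).trace) ↔ ∀ i j, 0 ≤ W i j := by
  classical
  constructor
  · intro h i j
    have hQ : single i j 1 + single j i 1 ∈ nonnegEntryCone ι := by
      refine ⟨by simp [IsSymm, add_comm], fun k l => ?_⟩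
      simp only [Matrix.add_apply, single_apply]
      positivity
    have hWQ : (W * (single i j 1 + single j i 1)).trace = W i j + W i j := by
      simp [mul_add, trace_mul_single, hW.apply]
    linarith [h _ hQ]
  · rintro h Q ⟨-, hQ⟩
    exact Finset.sum_nonneg fun i _ => Finset.sum_nonneg fun j _ => mul_nonneg (h i j) (hQ j i)

variable {m : ℕ}

/-- The cone (in fact a subspace) of the matrices `𝒥(J)` with `J` diagonal. -/
def calJCone (m : ℕ) : ConvexCone ℝ (Matrix (Fin m ⊕ Fin m) (Fin m ⊕ Fin m) ℝ) where
  carrier := calJ '' {J | J.IsDiag}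
  smul_mem' := by
    rintro c - _ ⟨J, hJ, rfl⟩
    exact ⟨c • J, IsDiag.smul c hJ, by simp [calJ, fromBlocks_smul]⟩
  add_mem' := by
    rintro _ ⟨J, hJ, rfl⟩ _ ⟨J', hJ', rfl⟩
    exact ⟨J + J', IsDiag.add hJ hJ', by simp [calJ, fromBlocks_add]⟩

theorem trace_mul_calJ_diagonal {W : Matrix (Fin m ⊕ Fin m) (Fin m ⊕ Fin m) ℝ} (hW : W.IsSymm)
    (d : Fin m → ℝ) :
    (W * calJ (diagonal d)).trace = 2 * ∑ i, W (.inl i) (.inr i) * d i := by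
  simp [trace, calJ, mul_apply, diagonal_apply, hW.apply, two_mul]

theorem forall_mem_calJCone_trace_mul_nonneg_iff
    {W : Matrix (Fin m ⊕ Fin m) (Fin m ⊕ Fin m) ℝ} (hW : W.IsSymm) :
    (∀ M ∈ calJCone m, 0 ≤ (W * M).trace) ↔ ∀ i, W (.inl i) (.inr i) = 0 := by
  constructor
  · intro h i
    have hle (c : ℝ) : 0 ≤ 2 * (W (.inl i) (.inr i) * c) := by
      simpa [trace_mul_calJ_diagonal hW, Pi.single_apply] using
        h _ ⟨_, isDiag_diagonal (Pi.single i c), rfl⟩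
    linarith [hle 1, hle (-1)]
  · rintro h _ ⟨J, hJ, rfl⟩
    rw [← IsDiag.diagonal_diag hJ, trace_mul_calJ_diagonal hW]
    simp [h]

/-- The cone of middle matrices `Q + 𝒥(J)`, of which `Π_NN` is the congruence image under `E`. -/
def multiplierCone (m : ℕ) : ConvexCone ℝ (Matrix (Fin m ⊕ Fin m) (Fin m ⊕ Fin m) ℝ) :=
  nonnegEntryCone (Fin m ⊕ Fin m) + calJCone m

theorem zero_mem_nonnegEntryCone {ι : Type*} : 0 ∈ nonnegEntryCone ι :=
  ⟨isSymm_zero, fun _ _ => le_rfl⟩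

theorem zero_mem_calJCone : 0 ∈ calJCone m :=
  ⟨0, isDiag_zero, by simp [calJ]⟩

theorem multiplierCone_nonempty :
    (multiplierCone m : Set (Matrix (Fin m ⊕ Fin m) (Fin m ⊕ Fin m) ℝ)).Nonempty :=
  ⟨0, 0, zero_mem_nonnegEntryCone, 0, zero_mem_calJCone, add_zero 0⟩

theorem isSymm_of_mem_multiplierCone {R : Matrix (Fin m ⊕ Fin m) (Fin m ⊕ Fin m) ℝ}
    (hR : R ∈ multiplierCone m) : R.IsSymm := by
  obtain ⟨Q, hQ, _, ⟨J, hJ, rfl⟩, rfl⟩ := hR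
  exact hQ.1.add (isSymm_zero.fromBlocks (IsDiag.isSymm hJ) isSymm_zero)

theorem forall_mem_multiplierCone_trace_mul_nonneg_iff
    {W : Matrix (Fin m ⊕ Fin m) (Fin m ⊕ Fin m) ℝ} (hW : W.IsSymm) :
    (∀ R ∈ multiplierCone m, 0 ≤ (W * R).trace) ↔
      (∀ i j, 0 ≤ W i j) ∧ ∀ i, W (.inl i) (.inr i) = 0 := by
  rw [multiplierCone, forall_mem_add_trace_mul_nonneg_iff ⟨0, zero_mem_nonnegEntryCone⟩
    ⟨0, zero_mem_calJCone⟩, forall_mem_nonnegEntryCone_trace_mul_nonneg_iff hW,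
    forall_mem_calJCone_trace_mul_nonneg_iff hW]

end Multipliers

section LinearMaps

variable {k l n m R : Type*} [Fintype k] [Fintype n] [CommSemiring R]

/-- The congruence `M ↦ Gᵀ M G`, as a linear map. -/
def congruence (G : Matrix k l R) : Matrix k k R →ₗ[R] Matrix l l R where
  toFun M := Gᵀ * M * G
  map_add' M N := by rw [Matrix.mul_add, Matrix.add_mul]
  map_smul' c M := by rw [Matrix.mul_smul, Matrix.smul_mul, RingHom.id_apply]

/-- The Lyapunov part `P ↦ [[P A + Aᵀ P, P B],[Bᵀ P, 0]]` of the LMI, as a linear map. -/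
def lyapunov (A : Matrix n n R) (B : Matrix n m R) :
    Matrix n n R →ₗ[R] Matrix (n ⊕ m) (n ⊕ m) R where
  toFun P := fromBlocks (P * A + Aᵀ * P) (P * B) (Bᵀ * P) 0
  map_add' P P' := by
    simp [fromBlocks_add, Matrix.add_mul, Matrix.mul_add, add_add_add_comm]
  map_smul' c P := by
    simp [fromBlocks_smul]

theorem isSymm_congruence (G : Matrix k l R) {M : Matrix k k R} (hM : M.IsSymm) :
    (congruence G M).IsSymm := by
  simp [congruence, IsSymm, hM.eq, Matrix.mul_assoc]

theorem isSymm_lyapunov (A : Matrix n n R) (B : Matrix n m R) {P : Matrix n n R}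
    (hP : P.IsSymm) : (lyapunov A B P).IsSymm :=
  .fromBlocks (by simp [IsSymm, hP.eq, add_comm]) (by simp [hP.eq]) isSymm_zero

theorem trace_mul_congruence [Fintype l] (G : Matrix k l R) (H : Matrix l l R) (M : Matrix k k R) :
    (H * congruence G M).trace = (G * H * Gᵀ * M).trace := by
  change (H * (Gᵀ * M * G)).trace = _
  rw [← Matrix.mul_assoc, trace_mul_comm]
  simp only [Matrix.mul_assoc]

theorem congruence_congruence [Fintype l] {p : Type*} (G : Matrix k l R) (F : Matrix l p R)
    (M : Matrix k k R) : congruence F (congruence G M) = congruence (G * F) M := by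
  simp [congruence, Matrix.mul_assoc]

theorem trace_fromBlocks [Fintype m] {α : Type*} [AddCommMonoid α] (A : Matrix n n α)
    (B : Matrix n m α) (C : Matrix m n α) (D : Matrix m m α) :
    (fromBlocks A B C D).trace = A.trace + D.trace := by
  simp [trace]

theorem trace_mul_lyapunov [Fintype m] (A : Matrix n n R) (B : Matrix n m R) {H11 : Matrix n n R}
    (hH11 : H11.IsSymm) (H12 : Matrix n m R) (H22 : Matrix m m R)
    (P : Matrix n n R) :
    (fromBlocks H11 H12 H12ᵀ H22 * lyapunov A B P).trace =
      ((A * H11 + B * H12ᵀ + (A * H11 + B * H12ᵀ)ᵀ) * P).trace := by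
  change (fromBlocks H11 H12 H12ᵀ H22 * fromBlocks _ _ _ _).trace = _
  have hA : (A * (H11 * P)).trace = (H11 * (P * A)).trace := by
    rw [trace_mul_comm, Matrix.mul_assoc]
  have hB : (B * (H12ᵀ * P)).trace = (H12ᵀ * (P * B)).trace := by
    rw [trace_mul_comm, Matrix.mul_assoc]
  simp only [fromBlocks_multiply, trace_fromBlocks, transpose_add, transpose_mul,
    transpose_transpose, hH11.eq, Matrix.add_mul, Matrix.mul_add, trace_add, Matrix.mul_zero,
    add_zero, Matrix.mul_assoc, hA, hB]
  ring

theorem forall_posDef_trace_mul_lyapunov_nonneg_iff [Fintype m] (A : Matrix n n ℝ)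
    (B : Matrix n m ℝ) {H11 : Matrix n n ℝ} (hH11 : H11.IsSymm) (H12 : Matrix n m ℝ)
    (H22 : Matrix m m ℝ) :
    (∀ P : Matrix n n ℝ, P.PosDef →
        0 ≤ (fromBlocks H11 H12 H12ᵀ H22 * lyapunov A B P).trace) ↔
      (A * H11 + B * H12ᵀ + (A * H11 + B * H12ᵀ)ᵀ).PosSemidef := by
  simp only [trace_mul_lyapunov A B hH11,
    posSemidef_iff_forall_posDef_trace_mul_nonneg (isSymm_add_transpose_self _)]

theorem forall_mem_multiplierCone_trace_mul_congruence_nonneg_iff [Fintype l] {m : ℕ}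
    (G : Matrix (Fin m ⊕ Fin m) l ℝ) {H : Matrix l l ℝ} (hH : H.IsSymm) :
    (∀ R ∈ multiplierCone m, 0 ≤ (H * congruence G R).trace) ↔
      (∀ i j, 0 ≤ (G * H * Gᵀ) i j) ∧ ∀ i, (G * H * Gᵀ) (.inl i) (.inr i) = 0 := by
  have hW : (G * H * Gᵀ).IsSymm := isSymm_congruence Gᵀ hH
  simp only [trace_mul_congruence, forall_mem_multiplierCone_trace_mul_nonneg_iff hW]

theorem exists_posSemidef_iff_exists_fromBlocks {n m : Type*}
    {p : Matrix (n ⊕ m) (n ⊕ m) ℝ → Prop} :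
    (∃ H, H.PosSemidef ∧ p H) ↔
      ∃ (H11 : Matrix n n ℝ) (H12 : Matrix n m ℝ) (H22 : Matrix m m ℝ),
        (fromBlocks H11 H12 H12ᵀ H22).PosSemidef ∧ p (fromBlocks H11 H12 H12ᵀ H22) := by
  constructor
  · rintro ⟨H, hH, hpH⟩
    have hblocks : fromBlocks H.toBlocks₁₁ H.toBlocks₁₂ H.toBlocks₁₂ᵀ H.toBlocks₂₂ = H := by
      have hsymm : H.IsSymm := isHermitian_iff_isSymm.mp hH.isHermitian
      rw [← fromBlocks_toBlocks H, isSymm_fromBlocks_iff] at hsymm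
      rw [hsymm.2.1, fromBlocks_toBlocks]
    exact ⟨H.toBlocks₁₁, H.toBlocks₁₂, H.toBlocks₂₂, by rwa [hblocks], by rwa [hblocks]⟩
  · rintro ⟨H11, H12, H22, hH, hpH⟩
    exact ⟨_, hH, hpH⟩

end LinearMaps

section LMI

variable {n : Type*} {m : ℕ}

/-- The cone of positive definite matrices, in which `P` ranges. -/
def posDefCone (n : Type*) : ConvexCone ℝ (Matrix n n ℝ) where
  carrier := {P | P.PosDef}
  smul_mem' _ hc _ hP := hP.smul hc
  add_mem' _ hP _ hP' := hP.add hP'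

theorem posDefCone_nonempty : (posDefCone n : Set (Matrix n n ℝ)).Nonempty := by
  classical
  exact ⟨1, PosDef.one⟩

theorem mem_PiNN_iff {M : Matrix (Fin m ⊕ Fin m) (Fin m ⊕ Fin m) ℝ} :
    M ∈ PiNN m ↔ ∃ R ∈ multiplierCone m, congruence (Emat m) R = M := by
  constructor
  · rintro ⟨Q, J, hJ, hQ, hQ_nonneg, rfl⟩
    exact ⟨_, ⟨Q, ⟨hQ, hQ_nonneg⟩, calJ J, ⟨J, hJ, rfl⟩, rfl⟩, rfl⟩
  · rintro ⟨_, ⟨Q, ⟨hQ, hQ_nonneg⟩, _, ⟨J, hJ, rfl⟩, rfl⟩, rfl⟩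
    exact ⟨Q, J, hJ, hQ, hQ_nonneg, rfl⟩

theorem Emat_mul_fromBlocks (C : Matrix (Fin m) n ℝ) (D : Matrix (Fin m) (Fin m) ℝ) :
    Emat m * fromBlocks C D 0 (1 : Matrix (Fin m) (Fin m) ℝ) =
      fromBlocks (-C) (1 - D) 0 (1 : Matrix (Fin m) (Fin m) ℝ) := by
  rw [Emat, fromBlocks_multiply]
  simp [sub_eq_neg_add]

variable [Fintype n] (A : Matrix n n ℝ) (B : Matrix n (Fin m) ℝ) (C : Matrix (Fin m) n ℝ)
  (D : Matrix (Fin m) (Fin m) ℝ)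

/-- The cone of left-hand sides of the primal LMI. -/
def lmiCone : ConvexCone ℝ (Matrix (n ⊕ Fin m) (n ⊕ Fin m) ℝ) :=
  (posDefCone n).map (lyapunov A B) +
    (multiplierCone m).map
      (congruence (Emat m * fromBlocks C D 0 (1 : Matrix (Fin m) (Fin m) ℝ)))

theorem mem_lmiCone_iff {L : Matrix (n ⊕ Fin m) (n ⊕ Fin m) ℝ} :
    L ∈ lmiCone A B C D ↔ ∃ P M, P.PosDef ∧ M ∈ PiNN m ∧
      lyapunov A B P + congruence (fromBlocks C D 0 (1 : Matrix (Fin m) (Fin m) ℝ)) M = L := by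
  simp only [mem_PiNN_iff]
  constructor
  · rintro ⟨_, ⟨P, hP, rfl⟩, _, ⟨R, hR, rfl⟩, rfl⟩
    exact ⟨P, _, hP, ⟨R, hR, rfl⟩, by rw [congruence_congruence]⟩
  · rintro ⟨P, _, hP, ⟨R, hR, rfl⟩, rfl⟩
    exact ⟨_, ⟨P, hP, rfl⟩, _, ⟨R, hR, rfl⟩, by rw [congruence_congruence]⟩

theorem lmiCone_nonempty : (lmiCone A B C D : Set (Matrix (n ⊕ Fin m) (n ⊕ Fin m) ℝ)).Nonempty :=
  (posDefCone_nonempty.image _).add (multiplierCone_nonempty.image _)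

theorem isSymm_of_mem_lmiCone {L : Matrix (n ⊕ Fin m) (n ⊕ Fin m) ℝ}
    (hL : L ∈ lmiCone A B C D) : L.IsSymm := by
  obtain ⟨_, ⟨P, hP, rfl⟩, _, ⟨R, hR, rfl⟩, rfl⟩ := hL
  exact (isSymm_lyapunov A B (isHermitian_iff_isSymm.mp (PosDef.isHermitian hP))).add
    (isSymm_congruence _ (isSymm_of_mem_multiplierCone hR))

theorem forall_mem_lmiCone_trace_mul_nonneg_iff {H11 : Matrix n n ℝ} {H12 : Matrix n (Fin m) ℝ}
    {H22 : Matrix (Fin m) (Fin m) ℝ} (hH : (fromBlocks H11 H12 H12ᵀ H22).IsSymm) :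
    (∀ L ∈ lmiCone A B C D, 0 ≤ (fromBlocks H11 H12 H12ᵀ H22 * L).trace) ↔
      (A * H11 + B * H12ᵀ + (A * H11 + B * H12ᵀ)ᵀ).PosSemidef ∧
      (∀ i j, 0 ≤ (fromBlocks (-C) (1 - D) 0 (1 : Matrix (Fin m) (Fin m) ℝ) *
        fromBlocks H11 H12 H12ᵀ H22 *
        (fromBlocks (-C) (1 - D) 0 (1 : Matrix (Fin m) (Fin m) ℝ))ᵀ) i j) ∧
      ∀ i : Fin m, ((-C) * H12 + (1 - D) * H22 : Matrix (Fin m) (Fin m) ℝ) i i = 0 := by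
  have hoffdiag (i : Fin m) : (fromBlocks (-C) (1 - D) 0 (1 : Matrix (Fin m) (Fin m) ℝ) *
      fromBlocks H11 H12 H12ᵀ H22 *
      (fromBlocks (-C) (1 - D) 0 (1 : Matrix (Fin m) (Fin m) ℝ))ᵀ) (.inl i) (.inr i) =
        ((-C) * H12 + (1 - D) * H22 : Matrix (Fin m) (Fin m) ℝ) i i := by
    rw [fromBlocks_transpose, fromBlocks_multiply, fromBlocks_multiply, fromBlocks_apply₁₂]
    simp
  simp only [← hoffdiag]
  rw [lmiCone, Emat_mul_fromBlocks, forall_mem_add_trace_mul_nonneg_iff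
    (posDefCone_nonempty.image _) (multiplierCone_nonempty.image _)]
  exact and_congr
    (Set.forall_mem_image.trans
      (forall_posDef_trace_mul_lyapunov_nonneg_iff A B (isSymm_fromBlocks_iff.mp hH).1 H12 H22))
    (Set.forall_mem_image.trans
      (forall_mem_multiplierCone_trace_mul_congruence_nonneg_iff _ hH))

end LMI

/-- The primal LMI is infeasible if and only if the dual LMI is feasible. -/
theorem primal_infeasible_iff_dual_feasible {n m : ℕ}
    (A : Matrix (Fin n) (Fin n) ℝ) (B : Matrix (Fin n) (Fin m) ℝ)
    (C : Matrix (Fin m) (Fin n) ℝ) (D : Matrix (Fin m) (Fin m) ℝ) :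
    (¬ ∃ (P : Matrix (Fin n) (Fin n) ℝ) (Pi : Matrix (Fin m ⊕ Fin m) (Fin m ⊕ Fin m) ℝ),
        P.PosDef ∧ Pi ∈ PiNN m ∧
        (-(fromBlocks (P * A + Aᵀ * P) (P * B) (Bᵀ * P) 0 +
            (fromBlocks C D 0 (1 : Matrix (Fin m) (Fin m) ℝ))ᵀ * Pi *
              fromBlocks C D 0 (1 : Matrix (Fin m) (Fin m) ℝ))).PosDef) ↔
    (∃ (H11 : Matrix (Fin n) (Fin n) ℝ) (H12 : Matrix (Fin n) (Fin m) ℝ)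
        (H22 : Matrix (Fin m) (Fin m) ℝ),
        (fromBlocks H11 H12 H12ᵀ H22).PosSemidef ∧
        fromBlocks H11 H12 H12ᵀ H22 ≠ 0 ∧
        (A * H11 + B * H12ᵀ + (A * H11 + B * H12ᵀ)ᵀ).PosSemidef ∧
        (∀ i j, 0 ≤ (fromBlocks (-C) (1 - D) 0 (1 : Matrix (Fin m) (Fin m) ℝ) *
            fromBlocks H11 H12 H12ᵀ H22 *
            (fromBlocks (-C) (1 - D) 0 (1 : Matrix (Fin m) (Fin m) ℝ))ᵀ) i j) ∧
        (∀ i : Fin m, ((-C) * H12 + (1 - D) * H22 : Matrix (Fin m) (Fin m) ℝ) i i = 0)) := by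
  calc
    _ ↔ ∀ L ∈ lmiCone A B C D, ¬ (-L).PosDef := by
      simp only [mem_lmiCone_iff, not_exists, not_and]
      exact ⟨fun h L ⟨P, M, hP, hM, hL⟩ => hL ▸ h P M hP hM,
        fun h P M hP hM => h _ ⟨P, M, hP, hM, rfl⟩⟩
    _ ↔ ∃ H : Matrix (Fin n ⊕ Fin m) (Fin n ⊕ Fin m) ℝ, H.PosSemidef ∧ H ≠ 0 ∧
        ∀ L ∈ lmiCone A B C D, 0 ≤ (H * L).trace :=
      forall_not_neg_posDef_iff_exists_posSemidef (lmiCone_nonempty A B C D)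
        fun _ => isSymm_of_mem_lmiCone A B C D
    _ ↔ _ := exists_posSemidef_iff_exists_fromBlocks
    _ ↔ _ := by
      refine exists_congr fun H11 => exists_congr fun H12 => exists_congr fun H22 =>
        and_congr_right fun hH => and_congr_right fun _ => ?_
      exact forall_mem_lmiCone_trace_mul_nonneg_iff A B C D
        (isHermitian_iff_isSymm.mp hH.isHermitian)
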